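/- Let m ≥ 1 be an integer, H₀ ∈ (1 − 1/(2m), 1), and let L : (0,∞) → (0,∞) be measurable, locally bounded, slowly varying at +∞ and bounded away from 0 and +∞ on every compact subset of (0,∞). Let e : ℝ → ℝ be square-integrable with ∫_ℝ e(u)² du = 1 and suppose: (i) |e(u)| ≤ C u^{H₀ − 3/2} L(u) for almost all u > 0, for some constant C; (ii) e(u) ~ C₀ u^{H₀ − 3/2} L(u) as u → +∞, where C₀ = (∫₀^∞ (u + u²)^{H₀ − 3/2} du)^{−1/2}; (iii) there exists γ with 0 < γ < min{H₀ − (1 − 1/(2m)), 1 − H₀} such that for every t > 0, sup_{y ∈ (0,t]} [∫_{−∞}^0 |e(u) e(xy + u)| du] / (x^{2H₀−2} L(x)² y^{2H₀ − 2 − 2γ}) → 0 as x → +∞. Then the covariance function R(x) := ∫_ℝ e(u) e(u + x) du satisfies R(x) / (x^{2H₀ − 2} L(x)²) → 1 as x → +∞. -/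

import Mathlib

open MeasureTheory Filter Set
open scoped Topology

noncomputable section

/-- `L : (0,∞) → (0,∞)` is slowly varying at `+∞`: `L(λx)/L(x) → 1` as `x → +∞`
for every `λ > 0`. -/
def SlowlyVaryingAtTop (L : ℝ → ℝ) : Prop :=
  ∀ lam : ℝ, 0 < lam → Tendsto (fun x => L (lam * x) / L x) atTop (𝓝 1)

/-- `L` is bounded away from `0` and `+∞` on every compact subset of `(0,∞)`. -/
def BddAwayOnCompacts (L : ℝ → ℝ) : Prop :=
  ∀ K : Set ℝ, K ⊆ Set.Ioi 0 → IsCompact K →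
    ∃ c C : ℝ, 0 < c ∧ ∀ x ∈ K, c ≤ L x ∧ L x ≤ C

/-! Split `∫ e(u) e(u + x) du` at `0` and at a large `X`. With `φ(u) = u ^ a * L u` and
`a = H₀ - 3/2 ∈ (-1, -1/2)`, the normalization `x ^ (2 * H₀ - 2) * L x ^ 2` is `x * φ x ^ 2`.

* On `(-∞, 0)` the integral is negligible by assumption.
* On `(0, X]` it is `O(φ x)`, which is negligible because `x * φ x → ∞` when `a > -1`.
* On `(X, ∞)` the substitution `u = x * v` turns the quotient into the integral over `v` of
  `(e (x * v) / φ x) * (e (x * (v + 1)) / φ x)`, whose integrand tends to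
  `c ^ 2 * v ^ a * (v + 1) ^ a` and is dominated by Potter's bound.

Potter's bound follows from the uniform convergence theorem for slowly varying functions: chaining
steps of length one in logarithmic scale shows that `φ` stays within a small power of `u ^ a`. -/

/-- Additive form of slow variation: `t ↦ log (L (exp t))` has this property when `L` is slowly
varying. -/
def AddSlowlyVarying (h : ℝ → ℝ) : Prop :=
  ∀ u, Tendsto (fun x => h (x + u) - h x) atTop (𝓝 0)

/-- The increment `|h (x + v) - h x|`, truncated at `1` so that dominated convergence applies to it
without any bound on `h`. -/
def truncIncr (h : ℝ → ℝ) (x v : ℝ) : ℝ :=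
  min 1 |h (x + v) - h x|

section UniformConvergence

variable {h : ℝ → ℝ}

lemma truncIncr_nonneg (h : ℝ → ℝ) (x v : ℝ) : 0 ≤ truncIncr h x v :=
  le_min zero_le_one (abs_nonneg _)

lemma norm_truncIncr_le_one (h : ℝ → ℝ) (x v : ℝ) : ‖truncIncr h x v‖ ≤ 1 := by
  rw [Real.norm_of_nonneg (truncIncr_nonneg h x v)]
  exact min_le_left _ _

lemma truncIncr_le_add (h : ℝ → ℝ) (x u w : ℝ) :
    truncIncr h x u ≤ truncIncr h x (u + w) + truncIncr h (x + u) w := by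
  have triangle := abs_sub_le (h (x + u)) (h (x + u + w)) (h x)
  rw [abs_sub_comm (h (x + u)), add_assoc x u w] at triangle
  have := abs_nonneg (h (x + (u + w)) - h x)
  have := abs_nonneg (h (x + (u + w)) - h (x + u))
  simp only [truncIncr, add_assoc]
  grind

lemma measurable_truncIncr (hm : Measurable h) (x : ℝ) : Measurable (truncIncr h x) := by
  unfold truncIncr
  fun_prop

lemma intervalIntegrable_truncIncr (hm : Measurable h) (x a b : ℝ) :
    IntervalIntegrable (truncIncr h x) volume a b :=
  (intervalIntegrable_const (c := (1 : ℝ))).mono_fun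
    (measurable_truncIncr hm x).aestronglyMeasurable
    (.of_forall fun v => by simpa using norm_truncIncr_le_one h x v)

lemma AddSlowlyVarying.tendsto_integral_truncIncr (hs : AddSlowlyVarying h) (hm : Measurable h)
    (a b : ℝ) : Tendsto (fun x => ∫ v in a..b, truncIncr h x v) atTop (𝓝 0) := by
  have pointwise (v : ℝ) : Tendsto (fun x => truncIncr h x v) atTop (𝓝 0) := by
    simpa [truncIncr] using (tendsto_const_nhds (x := (1 : ℝ))).min (hs v).abs
  simpa using intervalIntegral.tendsto_integral_filter_of_dominated_convergence
    (μ := volume) (a := a) (b := b) (f := fun _ => (0 : ℝ)) (fun _ => 1)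
    (.of_forall fun x => (measurable_truncIncr hm x).aestronglyMeasurable)
    (.of_forall fun x => .of_forall fun v _ => norm_truncIncr_le_one h x v)
    intervalIntegrable_const (.of_forall fun v _ => pointwise v)

-- Average `truncIncr_le_add` over `w ∈ [0, 1]`: pointwise convergence thus becomes uniform in `u`.
lemma truncIncr_le_integral_add_integral (hm : Measurable h) {a b u : ℝ} (hu : u ∈ Icc a b)
    (x : ℝ) :
    truncIncr h x u ≤
      (∫ v in a..b + 1, truncIncr h x v) + ∫ w in (0 : ℝ)..1, truncIncr h (x + u) w := by
  have shifted : IntervalIntegrable (fun w => truncIncr h x (u + w)) volume 0 1 := by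
    simpa using (intervalIntegrable_truncIncr hm x u (u + 1)).comp_add_left u
  have unshifted := intervalIntegrable_truncIncr hm (x + u) 0 1
  calc truncIncr h x u = ∫ _ in (0 : ℝ)..1, truncIncr h x u := by simp
    _ ≤ ∫ w in (0 : ℝ)..1, (truncIncr h x (u + w) + truncIncr h (x + u) w) :=
        intervalIntegral.integral_mono_on zero_le_one intervalIntegrable_const
          (shifted.add unshifted) fun w _ => truncIncr_le_add h x u w
    _ = (∫ v in u..u + 1, truncIncr h x v) + ∫ w in (0 : ℝ)..1, truncIncr h (x + u) w := by
        rw [intervalIntegral.integral_add shifted unshifted,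
          intervalIntegral.integral_comp_add_left (truncIncr h x), add_zero]
    _ ≤ _ := by
        gcongr
        exact intervalIntegral.integral_mono_interval hu.1 (by linarith) (by linarith [hu.2])
          (.of_forall (truncIncr_nonneg h x)) (intervalIntegrable_truncIncr hm x _ _)

theorem AddSlowlyVarying.tendstoUniformlyOn (hs : AddSlowlyVarying h) (hm : Measurable h)
    {K : Set ℝ} (hK : IsCompact K) :
    TendstoUniformlyOn (fun x u => h (x + u) - h x) 0 atTop K := by
  obtain ⟨a, ha⟩ := hK.bddBelow
  obtain ⟨b, hb⟩ := hK.bddAbove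
  refine Metric.tendstoUniformlyOn_iff.2 fun δ hδ => ?_
  have half_pos : 0 < min 1 δ / 2 := half_pos (lt_min one_pos hδ)
  have near := (hs.tendsto_integral_truncIncr hm a (b + 1)).eventually_lt_const half_pos
  have shifted := (tendsto_atTop_add_const_right atTop a tendsto_id).eventually
    (eventually_forall_ge_atTop.2
      ((hs.tendsto_integral_truncIncr hm 0 1).eventually_lt_const half_pos))
  filter_upwards [near, shifted] with x hx hxa u hu
  have small : truncIncr h x u < min 1 δ := by
    have := truncIncr_le_integral_add_integral hm ⟨ha hu, hb hu⟩ x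
    have := hxa (x + u) (add_le_add_right (ha hu) x)
    linarith
  rw [Pi.zero_apply, dist_zero_left, Real.norm_eq_abs]
  exact lt_of_not_ge fun hge => small.not_ge (min_le_min_left 1 hge)

end UniformConvergence

theorem AddSlowlyVarying.eventually_forall_abs_sub_le {h : ℝ → ℝ} (hs : AddSlowlyVarying h)
    (hm : Measurable h) {δ ε : ℝ} (hδ : 0 < δ) (hε : 0 < ε) :
    ∀ᶠ X in atTop, ∀ x ≥ X, ∀ y ≥ x, |h y - h x| ≤ δ + ε * (y - x) := by
  have uniform := eventually_forall_ge_atTop.2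
    (Metric.tendstoUniformlyOn_iff.1 (hs.tendstoUniformlyOn hm (isCompact_Icc (a := 0) (b := 1)))
      δ hδ)
  have unit_step := eventually_forall_ge_atTop.2
    ((hs 1).abs.eventually_lt_const (abs_zero.trans_lt hε))
  filter_upwards [uniform, unit_step] with X hX hX' x hx y hy
  have steps (n : ℕ) : |h (x + n) - h x| ≤ ε * n := by
    induction n with
    | zero => simp
    | succ n ih =>
      have step := hX' (x + n) (by linarith [n.cast_nonneg (α := ℝ)])
      have triangle := abs_sub_le (h (x + n + 1)) (h (x + n)) (h x)
      push_cast
      rw [← add_assoc]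
      linarith
  have floor_le := Nat.floor_le (sub_nonneg.2 hy)
  have lt_floor := Nat.lt_floor_add_one (y - x)
  set n := ⌊y - x⌋₊
  have fract : |h y - h (x + n)| < δ := by
    have := hX (x + n) (by linarith [n.cast_nonneg (α := ℝ)]) (y - x - n)
      ⟨by linarith, by linarith⟩
    rwa [Pi.zero_apply, dist_zero_left, Real.norm_eq_abs, show x + n + (y - x - n) = y by ring]
      at this
  calc |h y - h x| ≤ |h y - h (x + n)| + |h (x + n) - h x| := abs_sub_le _ _ _
    _ ≤ δ + ε * n := add_le_add fract.le (steps n)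
    _ ≤ δ + ε * (y - x) := by gcongr

/-- Regular variation at `+∞` with index `a`; index `0` is slow variation. -/
def RegularlyVaryingAtTop (φ : ℝ → ℝ) (a : ℝ) : Prop :=
  ∀ lam : ℝ, 0 < lam → Tendsto (fun x => φ (lam * x) / φ x) atTop (𝓝 (lam ^ a))

/-- The function `v ↦ max (v ^ (a - ε)) (v ^ (a + ε))` which, up to a constant, bounds
`φ (x * v) / φ x` for `φ` regularly varying with index `a`. -/
def potterEnvelope (a ε v : ℝ) : ℝ :=
  max (v ^ (a - ε)) (v ^ (a + ε))

/-- The conclusion of Potter's theorem for `φ` on `[X, ∞)`, with constant `A` and loss `ε` in the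
exponent. -/
def PotterBound (φ : ℝ → ℝ) (a A ε X : ℝ) : Prop :=
  ∀ x ≥ X, ∀ y ≥ X, φ y ≤ A * potterEnvelope a ε (y / x) * φ x

section PotterEnvelope

variable {a ε v : ℝ}

lemma potterEnvelope_of_le_one (hε : 0 ≤ ε) (hv : 0 < v) (hv1 : v ≤ 1) :
    potterEnvelope a ε v = v ^ (a - ε) :=
  max_eq_left (Real.rpow_le_rpow_of_exponent_ge hv hv1 (by linarith))

lemma potterEnvelope_of_one_le (hε : 0 ≤ ε) (hv : 1 ≤ v) :
    potterEnvelope a ε v = v ^ (a + ε) :=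
  max_eq_right (Real.rpow_le_rpow_of_exponent_le hv (by linarith))

lemma potterEnvelope_nonneg (a ε : ℝ) (hv : 0 ≤ v) : 0 ≤ potterEnvelope a ε v :=
  le_max_of_le_left (Real.rpow_nonneg hv _)

lemma potterEnvelope_le_one (hε : 0 ≤ ε) (ha : a + ε ≤ 0) (hv : 1 ≤ v) :
    potterEnvelope a ε v ≤ 1 := by
  rw [potterEnvelope_of_one_le hε hv]
  exact Real.rpow_le_one_of_one_le_of_nonpos hv ha

lemma exp_mul_log_add_le_potterEnvelope (hv : 0 < v) :
    Real.exp (a * Real.log v + ε * |Real.log v|) ≤ potterEnvelope a ε v := by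
  simp only [potterEnvelope, Real.rpow_def_of_pos hv]
  rcases abs_cases (Real.log v) with ⟨habs, -⟩ | ⟨habs, -⟩ <;> rw [habs]
  · exact le_max_of_le_right (by gcongr; linarith)
  · exact le_max_of_le_left (by gcongr; linarith)

lemma measurable_potterEnvelope (a ε : ℝ) : Measurable (potterEnvelope a ε) := by
  unfold potterEnvelope
  fun_prop

lemma integrableOn_potterEnvelope_mul_shift (hε : 0 ≤ ε) (h0 : -1 < a - ε) (hinf : a + ε < -1 / 2) :
    IntegrableOn (fun v => potterEnvelope a ε v * potterEnvelope a ε (v + 1)) (Ioi 0) := by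
  have meas : Measurable fun v => potterEnvelope a ε v * potterEnvelope a ε (v + 1) := by
    have := measurable_potterEnvelope a ε
    fun_prop
  have near_zero : IntegrableOn (fun v : ℝ => v ^ (a - ε)) (Ioc 0 1) :=
    (intervalIntegrable_iff_integrableOn_Ioc_of_le zero_le_one).1
      (intervalIntegral.intervalIntegrable_rpow' h0)
  have near_top : IntegrableOn (fun v : ℝ => v ^ (2 * (a + ε))) (Ioi 1) :=
    integrableOn_Ioi_rpow_of_lt (by linarith) one_pos
  rw [← Ioc_union_Ioi_eq_Ioi (zero_le_one (α := ℝ))]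
  refine .union (near_zero.mono' meas.aestronglyMeasurable ?_)
    (near_top.mono' meas.aestronglyMeasurable ?_)
  · filter_upwards [ae_restrict_mem measurableSet_Ioc] with v hv
    rw [Real.norm_of_nonneg (mul_nonneg (potterEnvelope_nonneg a ε hv.1.le)
      (potterEnvelope_nonneg a ε (by linarith [hv.1]))),
      potterEnvelope_of_le_one hε hv.1 hv.2]
    exact mul_le_of_le_one_right (Real.rpow_nonneg hv.1.le _)
      (potterEnvelope_le_one hε (by linarith) (by linarith [hv.1]))
  · filter_upwards [ae_restrict_mem measurableSet_Ioi] with v (hv : 1 < v)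
    have hv0 : 0 < v := one_pos.trans hv
    rw [potterEnvelope_of_one_le hε hv.le, potterEnvelope_of_one_le hε (by linarith),
      Real.norm_of_nonneg (by positivity), two_mul, Real.rpow_add hv0 (a + ε)]
    gcongr ?_ * ?_
    exact Real.rpow_le_rpow_of_nonpos hv0 (by linarith) (by linarith)

end PotterEnvelope

lemma rpow_add_sq_eq_mul {v : ℝ} (hv : 0 ≤ v) (a : ℝ) :
    (v + v ^ 2) ^ a = v ^ a * (v + 1) ^ a := by
  rw [← Real.mul_rpow hv (by positivity)]
  ring_nf

lemma integral_Ioi_rpow_add_sq_pos {a : ℝ} (ha : a ∈ Ioo (-1 : ℝ) (-1 / 2)) :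
    0 < ∫ v in Ioi (0 : ℝ), (v + v ^ 2) ^ a := by
  have pos : ∀ v ∈ Ioi (0 : ℝ), 0 < (v + v ^ 2) ^ a := fun v (hv : 0 < v) => by positivity
  have int : IntegrableOn (fun v : ℝ => (v + v ^ 2) ^ a) (Ioi 0) := by
    refine (integrableOn_potterEnvelope_mul_shift (a := a) le_rfl (by linarith [ha.1])
      (by linarith [ha.2])).congr_fun (fun v (hv : 0 < v) => ?_) measurableSet_Ioi
    simp [potterEnvelope, rpow_add_sq_eq_mul hv.le]
  have support : Ioi 0 ⊆ Function.support fun v : ℝ => (v + v ^ 2) ^ a :=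
    fun v hv => (pos v hv).ne'
  rw [setIntegral_pos_iff_support_of_nonneg_ae
    ((ae_restrict_mem measurableSet_Ioi).mono fun v hv => (pos v hv).le) int,
    inter_eq_right.2 support]
  simp

section RegularVariation

variable {φ : ℝ → ℝ} {a : ℝ}

lemma SlowlyVaryingAtTop.regularlyVaryingAtTop_rpow_mul {L : ℝ → ℝ} (hL : SlowlyVaryingAtTop L)
    (a : ℝ) : RegularlyVaryingAtTop (fun x => x ^ a * L x) a := by
  intro lam hlam
  have := (hL lam hlam).const_mul (lam ^ a)
  rw [mul_one] at this
  refine this.congr' ?_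
  filter_upwards [eventually_gt_atTop 0] with x hx
  have := (Real.rpow_pos_of_pos hx a).ne'
  rw [Real.mul_rpow hlam.le hx.le]
  field_simp

lemma RegularlyVaryingAtTop.addSlowlyVarying (hφ : RegularlyVaryingAtTop φ a)
    (hpos : ∀ x > 0, 0 < φ x) :
    AddSlowlyVarying fun t => Real.log (φ (Real.exp t)) - a * t := by
  intro u
  have log_ratio := ((hφ (Real.exp u) (Real.exp_pos u)).comp Real.tendsto_exp_atTop).log
    (Real.rpow_pos_of_pos (Real.exp_pos u) a).ne'
  rw [Real.log_rpow (Real.exp_pos u), Real.log_exp] at log_ratio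
  have := log_ratio.sub_const (a * u)
  rw [sub_self] at this
  refine this.congr fun t => ?_
  have hne (s : ℝ) : φ (Real.exp s) ≠ 0 := (hpos _ (Real.exp_pos s)).ne'
  rw [Function.comp_apply, ← Real.exp_add, Real.log_div (hne _) (hne _), add_comm u t]
  ring

theorem RegularlyVaryingAtTop.eventually_potterBound (hφ : RegularlyVaryingAtTop φ a)
    (hpos : ∀ x > 0, 0 < φ x) (hm : Measurable φ) {A ε : ℝ} (hA : 1 < A) (hε : 0 < ε) :
    ∀ᶠ X in atTop, PotterBound φ a A ε X := by
  have log_bound := Real.tendsto_log_atTop.eventually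
    ((hφ.addSlowlyVarying hpos).eventually_forall_abs_sub_le (by fun_prop) (Real.log_pos hA) hε)
  filter_upwards [log_bound, eventually_gt_atTop 0] with X hX hX0 x hx y hy
  have hx0 := hX0.trans_le hx
  have hy0 := hX0.trans_le hy
  have ordered {s t : ℝ} (hs : X ≤ s) (hst : s ≤ t) := by
    have hs0 := hX0.trans_le hs
    have ht0 := hs0.trans_le hst
    have := hX (Real.log s) (Real.log_le_log hX0 hs) (Real.log t) (Real.log_le_log hs0 hst)
    rwa [Real.exp_log hs0, Real.exp_log ht0] at this
  have log_le : Real.log (φ y) ≤ Real.log A +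
      (a * Real.log (y / x) + ε * |Real.log (y / x)|) + Real.log (φ x) := by
    rw [Real.log_div hy0.ne' hx0.ne']
    rcases le_total x y with hxy | hyx
    · rw [abs_of_nonneg (sub_nonneg.2 (Real.log_le_log hx0 hxy))]
      linarith [(abs_le.1 (ordered hx hxy)).2]
    · rw [abs_of_nonpos (sub_nonpos.2 (Real.log_le_log hy0 hyx))]
      linarith [(abs_le.1 (ordered hy hyx)).1]
  have hA0 : 0 < A := one_pos.trans hA
  calc φ y = Real.exp (Real.log (φ y)) := (Real.exp_log (hpos y hy0)).symm
    _ ≤ A * Real.exp (a * Real.log (y / x) + ε * |Real.log (y / x)|) * φ x := by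
        refine (Real.exp_le_exp.2 log_le).trans_eq ?_
        rw [Real.exp_add, Real.exp_add, Real.exp_log hA0, Real.exp_log (hpos x hx0)]
    _ ≤ A * potterEnvelope a ε (y / x) * φ x := by
        have := (hpos x hx0).le
        gcongr
        exact exp_mul_log_add_le_potterEnvelope (by positivity)

lemma RegularlyVaryingAtTop.tendsto_self_mul_atTop (hφ : RegularlyVaryingAtTop φ a)
    (hpos : ∀ x > 0, 0 < φ x) (hm : Measurable φ) (ha : -1 < a) :
    Tendsto (fun x => x * φ x) atTop atTop := by
  obtain ⟨ε, hε, hεa⟩ := exists_between (neg_lt_iff_pos_add'.1 ha)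
  obtain ⟨X, hP, hX⟩ :=
    ((hφ.eventually_potterBound hpos hm one_lt_two hε).and (eventually_gt_atTop 0)).exists
  have hφX := hpos X hX
  have lower {x : ℝ} (hx : X ≤ x) :
      x ^ (1 + (a - ε)) * (φ X / (2 * X ^ (a - ε))) ≤ x * φ x := by
    have hx0 := hX.trans_le hx
    have potter := hP x hx X le_rfl
    rw [potterEnvelope_of_le_one hε.le (by positivity) ((div_le_one hx0).2 hx),
      Real.div_rpow hX.le hx0.le] at potter
    rw [Real.rpow_add hx0, Real.rpow_one, mul_assoc]
    gcongr
    rw [mul_div_assoc', div_le_iff₀ (by positivity)]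
    calc x ^ (a - ε) * φ X
        ≤ x ^ (a - ε) * (2 * (X ^ (a - ε) / x ^ (a - ε)) * φ x) := by gcongr
      _ = φ x * (2 * X ^ (a - ε)) := by field_simp
  exact tendsto_atTop_mono' atTop ((eventually_ge_atTop X).mono fun x hx => lower hx)
    ((tendsto_rpow_atTop (by linarith)).atTop_mul_const (by positivity))

lemma RegularlyVaryingAtTop.eventually_forall_ge_le_two_mul (hφ : RegularlyVaryingAtTop φ a)
    (hpos : ∀ x > 0, 0 < φ x) (hm : Measurable φ) (ha : a < 0) :
    ∀ᶠ x in atTop, ∀ y ≥ x, φ y ≤ 2 * φ x := by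
  obtain ⟨ε, hε, hεa⟩ := exists_between (neg_pos.2 ha)
  filter_upwards [hφ.eventually_potterBound hpos hm one_lt_two hε, eventually_gt_atTop 0]
    with x hP hx y hxy
  have hφx := hpos x hx
  calc φ y ≤ 2 * potterEnvelope a ε (y / x) * φ x := hP x le_rfl y hxy
    _ ≤ 2 * 1 * φ x := by
        gcongr
        exact potterEnvelope_le_one hε.le (by linarith) ((one_le_div hx).2 hxy)
    _ = 2 * φ x := by rw [mul_one]

end RegularVariation

section Covariance

variable {φ f e : ℝ → ℝ} {a c A ε K X x v : ℝ}

lemma RegularlyVaryingAtTop.tendsto_comp_mul_div (hφ : RegularlyVaryingAtTop φ a)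
    (hpos : ∀ x > 0, 0 < φ x) (hlim : Tendsto (fun u => f u / φ u) atTop (𝓝 c)) (hv : 0 < v) :
    Tendsto (fun x => f (x * v) / φ x) atTop (𝓝 (c * v ^ a)) := by
  refine ((hlim.comp (tendsto_id.atTop_mul_const hv)).mul (hφ v hv)).congr' ?_
  filter_upwards [eventually_gt_atTop 0] with x hx
  rw [Function.comp_apply, id_eq, mul_comm v x,
    div_mul_div_cancel₀ (hpos (x * v) (by positivity)).ne']

lemma PotterBound.abs_comp_mul_div_le (hP : PotterBound φ a A ε X) (hpos : ∀ x > 0, 0 < φ x)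
    (hX : 0 < X) (hA : 0 ≤ A) (hK : 0 ≤ K) (hf : ∀ u, |f u| ≤ K * (Ioi X).indicator φ u)
    (hx : X ≤ x) (hv : 0 < v) :
    |f (x * v) / φ x| ≤ K * A * potterEnvelope a ε v := by
  have hx0 := hX.trans_le hx
  have hφx := hpos x hx0
  rw [abs_div, abs_of_pos hφx, div_le_iff₀ hφx]
  rcases le_or_gt (x * v) X with hle | hlt
  · have := potterEnvelope_nonneg a ε hv.le
    refine (hf (x * v)).trans ?_
    rw [indicator_of_notMem (notMem_Ioi.2 hle), mul_zero]
    positivity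
  · have potter := hP x hx (x * v) hlt.le
    rw [mul_div_cancel_left₀ v hx0.ne'] at potter
    calc |f (x * v)| ≤ K * φ (x * v) := by
          simpa [indicator_of_mem (mem_Ioi.2 hlt)] using hf (x * v)
      _ ≤ K * (A * potterEnvelope a ε v * φ x) := by gcongr
      _ = K * A * potterEnvelope a ε v * φ x := by ring

lemma integral_comp_mul_div_mul_eq (f φ : ℝ → ℝ) (hx : 0 < x) :
    ∫ v in Ioi 0, f (x * v) / φ x * (f (x * (v + 1)) / φ x) =
      (∫ u in Ioi 0, f u * f (u + x)) / (x * φ x ^ 2) := by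
  have substitution := integral_comp_mul_left_Ioi (fun u => f u * f (u + x)) 0 hx
  rw [mul_zero, smul_eq_mul] at substitution
  simp only [div_mul_div_comm, mul_add_one, integral_div, substitution, ← sq]
  rw [div_mul_eq_div_div, inv_mul_eq_div]

lemma aestronglyMeasurable_comp_mul_left (hf : AEStronglyMeasurable f) (hx : x ≠ 0) :
    AEStronglyMeasurable fun v => f (x * v) :=
  hf.comp_quasiMeasurePreserving (Measure.quasiMeasurePreserving_smul volume hx)

theorem RegularlyVaryingAtTop.tendsto_integral_Ioi_zero_mul_shift_div
    (hφ : RegularlyVaryingAtTop φ a) (hpos : ∀ x > 0, 0 < φ x)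
    (hε : 0 ≤ ε) (h0 : -1 < a - ε) (hinf : a + ε < -1 / 2) (hf : AEStronglyMeasurable f)
    (hdom : ∀ᶠ x in atTop, ∀ v > 0, |f (x * v) / φ x| ≤ K * potterEnvelope a ε v)
    (hlim : Tendsto (fun u => f u / φ u) atTop (𝓝 c)) :
    Tendsto (fun x => (∫ u in Ioi 0, f u * f (u + x)) / (x * φ x ^ 2)) atTop
      (𝓝 (c ^ 2 * ∫ v in Ioi (0 : ℝ), (v + v ^ 2) ^ a)) := by
  let F : ℝ → ℝ → ℝ := fun x v => f (x * v) / φ x * (f (x * (v + 1)) / φ x)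
  have meas {x : ℝ} (hx : 0 < x) : AEStronglyMeasurable (F x) := by
    have hfx := aestronglyMeasurable_comp_mul_left hf hx.ne'
    simp only [F, div_eq_mul_inv]
    exact (hfx.mul_const _).mul ((hfx.comp_quasiMeasurePreserving
      (measurePreserving_add_right volume 1).quasiMeasurePreserving).mul_const _)
  have dominated : ∀ᶠ x in atTop, ∀ v > 0,
      ‖F x v‖ ≤ K ^ 2 * (potterEnvelope a ε v * potterEnvelope a ε (v + 1)) := by
    filter_upwards [hdom] with x hx v hv
    rw [norm_mul, sq, mul_mul_mul_comm]
    exact mul_le_mul (hx v hv) (hx (v + 1) (by positivity)) (norm_nonneg _)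
      ((abs_nonneg _).trans (hx v hv))
  have pointwise {v : ℝ} (hv : 0 < v) :
      Tendsto (fun x => F x v) atTop (𝓝 (c ^ 2 * (v + v ^ 2) ^ a)) := by
    rw [rpow_add_sq_eq_mul hv.le, sq, mul_mul_mul_comm]
    exact (hφ.tendsto_comp_mul_div hpos hlim hv).mul
      (hφ.tendsto_comp_mul_div hpos hlim (by positivity))
  have tendsto_integral : Tendsto (fun x => ∫ v in Ioi 0, F x v) atTop
      (𝓝 (∫ v in Ioi (0 : ℝ), c ^ 2 * (v + v ^ 2) ^ a)) :=
    tendsto_integral_filter_of_dominated_convergence _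
      ((eventually_gt_atTop 0).mono fun x hx => (meas hx).restrict)
      (dominated.mono fun x hx => (ae_restrict_mem measurableSet_Ioi).mono hx)
      ((integrableOn_potterEnvelope_mul_shift hε h0 hinf).const_mul (K ^ 2))
      ((ae_restrict_mem measurableSet_Ioi).mono fun v hv => pointwise hv)
  rw [integral_const_mul] at tendsto_integral
  exact tendsto_integral.congr'
    ((eventually_gt_atTop 0).mono fun x hx => integral_comp_mul_div_mul_eq f φ hx)

lemma integral_Ioi_zero_indicator_mul_shift (e : ℝ → ℝ) (hX : 0 ≤ X) (hx : 0 ≤ x) :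
    ∫ u in Ioi 0, (Ioi X).indicator e u * (Ioi X).indicator e (u + x) =
      ∫ u in Ioi X, e u * e (u + x) := by
  have product (u : ℝ) : (Ioi X).indicator e u * (Ioi X).indicator e (u + x) =
      (Ioi X).indicator (fun u => e u * e (u + x)) u := by
    by_cases hu : X < u
    · simp [hu, hu.trans_le (le_add_of_nonneg_right hx)]
    · simp [hu]
  simp only [product]
  rw [setIntegral_indicator measurableSet_Ioi, Ioi_inter_Ioi, sup_of_le_right hX]

theorem RegularlyVaryingAtTop.eventually_tendsto_integral_Ioi_mul_shift_div
    (hφ : RegularlyVaryingAtTop φ a) (hpos : ∀ x > 0, 0 < φ x) (hm : Measurable φ)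
    (ha : a ∈ Ioo (-1 : ℝ) (-1 / 2)) (he : AEStronglyMeasurable e)
    (hlim : Tendsto (fun u => e u / φ u) atTop (𝓝 c)) :
    ∀ᶠ X in atTop, Tendsto (fun x => (∫ u in Ioi X, e u * e (u + x)) / (x * φ x ^ 2)) atTop
      (𝓝 (c ^ 2 * ∫ v in Ioi (0 : ℝ), (v + v ^ 2) ^ a)) := by
  obtain ⟨ε, hε, hlt⟩ := exists_between
    (lt_min (by linarith [ha.1] : 0 < a + 1) (by linarith [ha.2] : 0 < -1 / 2 - a))
  obtain ⟨hε0, hεinf⟩ := lt_min_iff.1 hlt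
  filter_upwards [hφ.eventually_potterBound hpos hm one_lt_two hε,
    eventually_forall_ge_atTop.2 (hlim.abs.eventually_lt_const (lt_add_one |c|)),
    eventually_gt_atTop 0] with X hP he_lt hX
  have bound (u : ℝ) : |(Ioi X).indicator e u| ≤ (|c| + 1) * (Ioi X).indicator φ u := by
    by_cases hu : X < u
    · have hφu := hpos u (hX.trans hu)
      have := (he_lt u hu.le).le
      rw [abs_div, abs_of_pos hφu, div_le_iff₀ hφu] at this
      simpa [hu]
    · simp [hu]
  have lim : Tendsto (fun u => (Ioi X).indicator e u / φ u) atTop (𝓝 c) := by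
    refine hlim.congr' ?_
    filter_upwards [eventually_gt_atTop X] with u hu
    rw [indicator_of_mem (mem_Ioi.2 hu)]
  refine (hφ.tendsto_integral_Ioi_zero_mul_shift_div hpos hε.le (by linarith) (by linarith)
    (he.indicator measurableSet_Ioi) ((eventually_ge_atTop X).mono fun x hx v hv =>
      hP.abs_comp_mul_div_le hpos hX zero_le_two (by positivity) bound hx hv) lim).congr' ?_
  filter_upwards [eventually_ge_atTop 0] with x hx
  rw [integral_Ioi_zero_indicator_mul_shift e hX.le hx]

lemma RegularlyVaryingAtTop.isBigO_integral_Ioc_mul_shift (hφ : RegularlyVaryingAtTop φ a)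
    (hpos : ∀ x > 0, 0 < φ x) (hm : Measurable φ) (ha : a < 0) (he : e =O[atTop] φ)
    (e_integrable : IntegrableOn e (Ioc 0 X)) :
    (fun x => ∫ u in Ioc 0 X, e u * e (u + x)) =O[atTop] φ := by
  obtain ⟨K, hK, hbound⟩ := he.exists_nonneg
  refine Asymptotics.IsBigO.of_bound ((∫ u in Ioc 0 X, ‖e u‖) * (K * 2)) ?_
  filter_upwards [eventually_gt_atTop 0, eventually_forall_ge_atTop.2 hbound.bound,
    hφ.eventually_forall_ge_le_two_mul hpos hm ha] with x hx he_le hφ_le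
  have shifted {u : ℝ} (hu : 0 < u) : ‖e (u + x)‖ ≤ K * 2 * φ x := by
    calc ‖e (u + x)‖ ≤ K * ‖φ (u + x)‖ := he_le _ (by linarith)
      _ ≤ K * (2 * φ x) := by
          rw [Real.norm_of_nonneg (hpos _ (by positivity)).le]
          gcongr
          exact hφ_le _ (by linarith)
      _ = K * 2 * φ x := (mul_assoc _ _ _).symm
  rw [Real.norm_of_nonneg (hpos x hx).le, mul_assoc, ← integral_mul_const]
  refine norm_integral_le_of_norm_le (e_integrable.norm.mul_const _) ?_
  filter_upwards [ae_restrict_mem measurableSet_Ioc] with u hu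
  rw [norm_mul]
  gcongr
  exact shifted hu.1

lemma RegularlyVaryingAtTop.isLittleO_self_mul_sq (hφ : RegularlyVaryingAtTop φ a)
    (hpos : ∀ x > 0, 0 < φ x) (hm : Measurable φ) (ha : -1 < a) :
    φ =o[atTop] fun x => x * φ x ^ 2 := by
  have one_isLittleO : (fun _ => (1 : ℝ)) =o[atTop] fun x => x * φ x :=
    (Asymptotics.isLittleO_const_left_of_ne one_ne_zero).2
      (tendsto_norm_atTop_atTop.comp (hφ.tendsto_self_mul_atTop hpos hm ha))
  simpa [sq, mul_assoc] using one_isLittleO.mul_isBigO (Asymptotics.isBigO_refl φ atTop)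

lemma integral_Iio_add_Ioc_add_Ioi {g : ℝ → ℝ} (hg : Integrable g) {b d : ℝ} (hbd : b ≤ d) :
    (∫ u in Iio b, g u) + (∫ u in Ioc b d, g u) + ∫ u in Ioi d, g u = ∫ u, g u := by
  rw [← integral_Iic_eq_integral_Iio,
    ← setIntegral_union (Iic_disjoint_Ioc le_rfl) measurableSet_Ioc
      hg.integrableOn hg.integrableOn, Iic_union_Ioc_eq_Iic hbd,
    intervalIntegral.integral_Iic_add_Ioi hg.integrableOn hg.integrableOn]

lemma integrable_mul_shift (he : MemLp e 2) (x : ℝ) :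
    Integrable fun u => e u * e (u + x) :=
  he.integrable_mul (he.comp_measurePreserving (measurePreserving_add_right volume x))

theorem RegularlyVaryingAtTop.tendsto_integral_mul_shift_div (hφ : RegularlyVaryingAtTop φ a)
    (hpos : ∀ x > 0, 0 < φ x) (hm : Measurable φ) (ha : a ∈ Ioo (-1 : ℝ) (-1 / 2))
    (he : MemLp e 2) (hlim : Tendsto (fun u => e u / φ u) atTop (𝓝 c))
    (hneg : (fun x => ∫ u in Iio 0, e u * e (u + x)) =o[atTop] fun x => x * φ x ^ 2) :
    Tendsto (fun x => (∫ u, e u * e (u + x)) / (x * φ x ^ 2)) atTop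
      (𝓝 (c ^ 2 * ∫ v in Ioi (0 : ℝ), (v + v ^ 2) ^ a)) := by
  obtain ⟨X, right, hX⟩ := ((hφ.eventually_tendsto_integral_Ioi_mul_shift_div hpos hm ha he.1
    hlim).and (eventually_ge_atTop 0)).exists
  have e_isBigO : e =O[atTop] φ := Asymptotics.isBigO_of_div_tendsto_nhds
    ((eventually_gt_atTop 0).mono fun x hx hφx => absurd hφx (hpos x hx).ne') c hlim
  have e_integrable : IntegrableOn e (Ioc 0 X) :=
    ((he.locallyIntegrable one_le_two).integrableOn_isCompact isCompact_Icc).mono_set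
      Ioc_subset_Icc_self
  have middle := (hφ.isBigO_integral_Ioc_mul_shift hpos hm (by linarith [ha.2]) e_isBigO
    e_integrable).trans_isLittleO (hφ.isLittleO_self_mul_sq hpos hm ha.1)
  have sum := (hneg.tendsto_div_nhds_zero.add middle.tendsto_div_nhds_zero).add right
  rw [add_zero, zero_add] at sum
  refine sum.congr fun x => ?_
  rw [← add_div, ← add_div, integral_Iio_add_Ioc_add_Ioi (integrable_mul_shift he x) hX]

end Covariance

theorem covariance_asymptotics_general {H₀ : ℝ} (hH₀ : H₀ ∈ Ioo (1 / 2 : ℝ) 1)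
    {L : ℝ → ℝ} (hLpos : ∀ x > 0, 0 < L x) (hLmeas : Measurable L) (hLslow : SlowlyVaryingAtTop L)
    {e : ℝ → ℝ} (he : MemLp e 2) {c : ℝ}
    (hasymp : Tendsto (fun u => e u / (u ^ (H₀ - 3 / 2) * L u)) atTop (𝓝 c))
    (hneg : (fun x => ∫ u in Iio 0, e u * e (u + x)) =o[atTop]
      fun x => x ^ (2 * H₀ - 2) * L x ^ 2) :
    Tendsto (fun x => (∫ u, e u * e (u + x)) / (x ^ (2 * H₀ - 2) * L x ^ 2)) atTop
      (𝓝 (c ^ 2 * ∫ v in Ioi (0 : ℝ), (v + v ^ 2) ^ (H₀ - 3 / 2))) := by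
  have scale : (fun x => x ^ (2 * H₀ - 2) * L x ^ 2) =ᶠ[atTop]
      fun x => x * (x ^ (H₀ - 3 / 2) * L x) ^ 2 := by
    filter_upwards [eventually_gt_atTop 0] with x hx
    rw [show 2 * H₀ - 2 = 1 + (H₀ - 3 / 2) * 2 by ring, Real.rpow_add hx, Real.rpow_one,
      Real.rpow_mul hx.le, Real.rpow_two]
    ring
  refine ((hLslow.regularlyVaryingAtTop_rpow_mul (H₀ - 3 / 2)).tendsto_integral_mul_shift_div
    (fun x hx => mul_pos (Real.rpow_pos_of_pos hx _) (hLpos x hx)) (by fun_prop)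
    ⟨by linarith [hH₀.1], by linarith [hH₀.2]⟩ he hasymp (hneg.trans_eventuallyEq scale)).congr' ?_
  filter_upwards [scale] with x hx
  rw [hx]

lemma half_lt_of_one_sub_one_div_lt {m : ℕ} (hm : 1 ≤ m) {H : ℝ}
    (hH : 1 - 1 / (2 * (m : ℝ)) < H) : 1 / 2 < H := by
  have : 1 / (2 * (m : ℝ)) ≤ 1 / 2 :=
    one_div_le_one_div_of_le two_pos (le_mul_of_one_le_right zero_le_two (by exact_mod_cast hm))
  linarith

lemma rpow_neg_half_sq_mul_self {I : ℝ} (hI : 0 < I) : (I ^ (-(1 : ℝ) / 2)) ^ 2 * I = 1 := by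
  rw [← Real.rpow_natCast, ← Real.rpow_mul hI.le]
  norm_num [Real.rpow_neg_one, hI.ne']

lemma tendsto_div_of_tendsto_div_const_mul {ι : Type*} {l : Filter ι} {f g : ι → ℝ} {C : ℝ}
    (hC : C ≠ 0) (h : Tendsto (fun i => f i / (C * g i)) l (𝓝 1)) :
    Tendsto (fun i => f i / g i) l (𝓝 C) := by
  simpa only [mul_one, ← mul_div_assoc, mul_div_mul_left _ _ hC] using h.const_mul C

lemma isLittleO_setIntegral_of_forall_exists_le {F : ℝ → ℝ → ℝ} {s : Set ℝ} {g : ℝ → ℝ}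
    (h : ∀ δ > 0, ∃ x₀, ∀ x ≥ x₀, ∫ u in s, ‖F x u‖ ≤ δ * g x) :
    (fun x => ∫ u in s, F x u) =o[atTop] g :=
  Asymptotics.isLittleO_iff.2 fun δ hδ => (eventually_atTop.2 (h δ hδ)).mono fun x hx =>
    (norm_integral_le_integral_norm _).trans (hx.trans (by gcongr; exact le_abs_self _))

/-- Asymptotics of the covariance function `R(x) = ∫ e(u) e(u+x) du` of the
moving-average kernel `e`: under the assumptions (i)–(iii) of the paper,
`R(x) / (x^{2H₀-2} L(x)²) → 1` as `x → +∞`. -/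
theorem covariance_asymptotics
    (m : ℕ) (hm : 1 ≤ m) (H₀ : ℝ) (hH₀ : H₀ ∈ Set.Ioo (1 - 1 / (2 * (m:ℝ))) 1)
    (L : ℝ → ℝ) (hLpos : ∀ x > 0, 0 < L x) (hLmeas : Measurable L)
    (hLloc : ∀ K : Set ℝ, K ⊆ Set.Ioi 0 → IsCompact K → ∃ C, ∀ x ∈ K, |L x| ≤ C)
    (hLslow : SlowlyVaryingAtTop L) (hLbdd : BddAwayOnCompacts L)
    (e : ℝ → ℝ) (he : MemLp e 2 volume)
    (hnorm : (∫ u, e u ^ 2) = 1)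
    (C : ℝ)
    (hbound : ∀ᵐ u : ℝ, 0 < u → |e u| ≤ C * u ^ (H₀ - 3 / 2) * L u)
    (hasymp : Tendsto
      (fun u : ℝ => e u /
        ((∫ v in Set.Ioi (0 : ℝ), (v + v ^ 2) ^ (H₀ - 3 / 2)) ^ (-(1 : ℝ) / 2)
          * u ^ (H₀ - 3 / 2) * L u))
      atTop (𝓝 1))
    (hgamma : ∃ γ : ℝ, 0 < γ ∧ γ < min (H₀ - (1 - 1 / (2 * (m:ℝ)))) (1 - H₀) ∧
      ∀ t > (0 : ℝ), ∀ δ > (0 : ℝ), ∃ x₀ : ℝ, ∀ x ≥ x₀, ∀ y ∈ Set.Ioc (0 : ℝ) t,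
        (∫ u in Set.Iio (0 : ℝ), |e u * e (x * y + u)|) ≤
          δ * (x ^ (2 * H₀ - 2) * L x ^ 2) * y ^ (2 * H₀ - 2 - 2 * γ)) :
    Tendsto (fun x : ℝ => (∫ u, e u * e (u + x)) / (x ^ (2 * H₀ - 2) * L x ^ 2))
      atTop (𝓝 1) := by
  obtain ⟨γ, -, -, hleft⟩ := hgamma
  have hH : H₀ ∈ Ioo (1 / 2 : ℝ) 1 := ⟨half_lt_of_one_sub_one_div_lt hm hH₀.1, hH₀.2⟩
  have hI : 0 < ∫ v in Ioi (0 : ℝ), (v + v ^ 2) ^ (H₀ - 3 / 2) :=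
    integral_Ioi_rpow_add_sq_pos ⟨by linarith [hH.1], by linarith [hH.2]⟩
  rw [← rpow_neg_half_sq_mul_self hI]
  refine covariance_asymptotics_general hH hLpos hLmeas hLslow he
    (tendsto_div_of_tendsto_div_const_mul (Real.rpow_pos_of_pos hI _).ne' ?_)
    (isLittleO_setIntegral_of_forall_exists_le fun δ hδ => ?_)
  · simpa only [mul_assoc] using hasymp
  · simpa [add_comm] using (hleft 1 one_pos δ hδ).imp fun x₀ h x hx => h x hx 1 ⟨one_pos, le_rfl⟩

end
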